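/- arXiv:2505.03263 — 3 statements merged into one kernel-verified Lean document; each statement's English description precedes it below -/
import Mathlib

section
/- Let g be an integer with 9 ≤ g ≤ 12. Then for all integers a, b, if (2g−2)·a² + 4·a·b − 2·b² = 0, then 12 divides (2g−2)·a + 2·b. -/
/-!
Completing the square gives `E² = 2 (g a² - (b - a)²)`. If `E = a H + b γ` is isotropic with
`a ≠ 0`, then `g` is the square of a rational, hence of an integer `k` with `b - a = k a`, and the
degree becomes `H · E = 2 k (k + 1) a`. The only square in `{9, …, 12}` is `9`, so `3 ∣ k`, while
`k (k + 1)` is even.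
-/

lemma isotropic_iff_sub_sq_eq_mul_sq {R : Type*} [CommRing R] [NoZeroDivisors R] [NeZero (2 : R)]
    {g a b : R} :
    (2 * g - 2) * a ^ 2 + 4 * a * b - 2 * b ^ 2 = 0 ↔ (b - a) ^ 2 = g * a ^ 2 := by
  have complete_square : (2 * g - 2) * a ^ 2 + 4 * a * b - 2 * b ^ 2 =
      2 * (g * a ^ 2 - (b - a) ^ 2) := by ring
  rw [complete_square, mul_eq_zero_iff_left two_ne_zero, sub_eq_zero, eq_comm]

lemma exists_sq_eq_of_sq_eq_mul_sq {R : Type*} [CommRing R] [IsDomain R] [IsIntegrallyClosed R]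
    {d x y : R} (hx : x ≠ 0) (h : y ^ 2 = d * x ^ 2) : ∃ k, k ^ 2 = d ∧ y = k * x := by
  obtain ⟨k, rfl⟩ : x ∣ y :=
    (IsIntegrallyClosed.pow_dvd_pow_iff two_ne_zero).1 (Dvd.intro_left d h.symm)
  refine ⟨k, mul_right_cancel₀ (pow_ne_zero 2 hx) ?_, mul_comm x k⟩
  rw [← h, mul_pow, mul_comm]

lemma two_mul_dvd_mul_add_one_of_odd_of_dvd {m k : ℤ} (hm : Odd m) (hmk : m ∣ k) :
    2 * m ∣ k * (k + 1) :=
  (Int.isCoprime_two_left.2 hm).mul_dvd (Int.two_dvd_mul_add_one k) (hmk.mul_right (k + 1))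

lemma abs_eq_of_sq_le_sq_of_sq_lt_add_one_sq {n k : ℤ} (hle : n ^ 2 ≤ k ^ 2)
    (hlt : k ^ 2 < (n + 1) ^ 2) : |k| = n := by
  have abs_le : |n| ≤ |k| := sq_le_sq.1 hle
  have abs_lt : |k| < |n + 1| := sq_lt_sq.1 hlt
  grind

theorem isotropic_degree_div_twelve_general {g m a b : ℤ} (hm : Odd m)
    (hg : ∀ k, k ^ 2 = g → m ∣ k) (h : (2 * g - 2) * a ^ 2 + 4 * a * b - 2 * b ^ 2 = 0) :
    4 * m ∣ (2 * g - 2) * a + 2 * b := by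
  have hsq : (b - a) ^ 2 = g * a ^ 2 := isotropic_iff_sub_sq_eq_mul_sq.1 h
  obtain rfl | ha := eq_or_ne a 0
  · obtain rfl : b = 0 := by simpa using hsq
    simp
  · obtain ⟨k, rfl, hk⟩ := exists_sq_eq_of_sq_eq_mul_sq ha hsq
    have dvd_mul_add_one : 2 * m ∣ k * (k + 1) :=
      two_mul_dvd_mul_add_one_of_odd_of_dvd hm (hg k rfl)
    calc 4 * m = 2 * (2 * m) := by ring
      _ ∣ 2 * (k * (k + 1)) * a := (mul_dvd_mul_left 2 dvd_mul_add_one).mul_right a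
      _ = (2 * k ^ 2 - 2) * a + 2 * b := by linear_combination -2 * hk

lemma three_dvd_of_nine_le_sq_of_sq_le_twelve {k : ℤ} (h9 : 9 ≤ k ^ 2) (h12 : k ^ 2 ≤ 12) :
    3 ∣ k := by
  have abs_eq_three : |k| = 3 := abs_eq_of_sq_le_sq_of_sq_lt_add_one_sq (by lia) (by lia)
  exact (dvd_abs 3 k).1 abs_eq_three.symm.dvd

/-- For `9 ≤ g ≤ 12` and integers `a, b`, if `(2g−2)·a² + 4·a·b − 2·b² = 0`,
then `12` divides `(2g−2)·a + 2·b`. -/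
theorem isotropic_degree_div_twelve (g : ℤ) (hg9 : 9 ≤ g) (hg12 : g ≤ 12)
    (a b : ℤ) (h : (2 * g - 2) * a ^ 2 + 4 * a * b - 2 * b ^ 2 = 0) :
    12 ∣ (2 * g - 2) * a + 2 * b :=
  isotropic_degree_div_twelve_general (m := 3) (by decide)
    (fun _ hk ↦ three_dvd_of_nine_le_sq_of_sq_le_twelve (hk ▸ hg9) (hk ▸ hg12)) h
end

section
/- Let g be an integer with 9 ≤ g ≤ 12. Then there are no integers a, b such that (2g−2)·a² + 4·a·b − 2·b² = 0 and 1 ≤ (2g−2)·a + 2·b ≤ g − 2. -/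
/-!
Completing the square turns `E² = 0` into `(b - a)² = g a²`. So either `E = 0`, or `g = n²` with
`b - a = n a`, and then `H · E = 2 n (n + 1) a`. As `n (n + 1) ≥ 0`, a positive degree forces
`a ≥ 1`, whence `H · E ≥ 2 n (n + 1) = n² + (n + 1)² - 1 ≥ n² = g`.
-/

theorem exists_eq_pow_of_pow_eq_mul_pow {R : Type*} [CommRing R] [IsDomain R] [IsIntegrallyClosed R]
    {k : ℕ} (hk : k ≠ 0) {g x y : R} (hy : y ≠ 0) (h : x ^ k = g * y ^ k) :
    ∃ n, g = n ^ k ∧ x = n * y := by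
  obtain ⟨n, rfl⟩ : y ∣ x :=
    (IsIntegrallyClosed.pow_dvd_pow_iff hk).mp (h ▸ dvd_mul_left (y ^ k) g)
  refine ⟨n, mul_right_cancel₀ (pow_ne_zero k hy) ?_, mul_comm y n⟩
  rw [← h, mul_pow, mul_comm]

theorem int_mul_add_one_nonneg (n : ℤ) : 0 ≤ n * (n + 1) := by
  nlinarith [sq_nonneg (2 * n + 1)]

namespace ConicK3

/-- The self-intersection `E²` of the class `E = a·H + b·γ`, where `H² = 2g - 2`, `H·γ = 2` and
`γ² = -2`. Here `g` is an arbitrary integer, whether or not a surface carries this lattice. -/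
def selfIntersection (g a b : ℤ) : ℤ :=
  (2 * g - 2) * a ^ 2 + 4 * a * b - 2 * b ^ 2

/-- The degree `H·E` of the class `E = a·H + b·γ` with respect to the polarization `H`, where
`H² = 2g - 2` and `H·γ = 2`. -/
def degree (g a b : ℤ) : ℤ :=
  (2 * g - 2) * a + 2 * b

variable {g a b : ℤ}

theorem selfIntersection_eq_zero_iff : selfIntersection g a b = 0 ↔ (b - a) ^ 2 = g * a ^ 2 := by
  unfold selfIntersection
  constructor <;> intro h <;> linarith

theorem ne_zero_of_degree_pos (h : selfIntersection g a b = 0) (hpos : 0 < degree g a b) :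
    a ≠ 0 := by
  rintro rfl
  obtain rfl : b = 0 := by simpa [selfIntersection] using h
  simp [degree] at hpos

theorem exists_eq_sq_of_selfIntersection_eq_zero (ha : a ≠ 0) (h : selfIntersection g a b = 0) :
    ∃ n, g = n ^ 2 ∧ b = (n + 1) * a := by
  obtain ⟨n, hg, hba⟩ :=
    exists_eq_pow_of_pow_eq_mul_pow two_ne_zero ha (selfIntersection_eq_zero_iff.mp h)
  exact ⟨n, hg, by linarith⟩

theorem degree_sq (n a : ℤ) : degree (n ^ 2) a ((n + 1) * a) = 2 * (n * (n + 1)) * a := by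
  unfold degree
  ring

theorem sq_le_degree_sq {n a : ℤ} (hpos : 0 < degree (n ^ 2) a ((n + 1) * a)) :
    n ^ 2 ≤ degree (n ^ 2) a ((n + 1) * a) := by
  rw [degree_sq] at hpos ⊢
  have hn : 0 ≤ 2 * (n * (n + 1)) := mul_nonneg zero_le_two (int_mul_add_one_nonneg n)
  have ha : 1 ≤ a := pos_of_mul_pos_right hpos hn
  have hn_succ : n + 1 ≠ 0 := by
    intro h
    simp [h] at hpos
  have hsq : 1 ≤ (n + 1) ^ 2 := sq_pos_of_ne_zero hn_succ
  calc
    n ^ 2 ≤ n ^ 2 + ((n + 1) ^ 2 - 1) := by linarith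
    _ = 2 * (n * (n + 1)) := by ring
    _ ≤ 2 * (n * (n + 1)) * a := le_mul_of_one_le_right hn ha

end ConicK3

open ConicK3 in
theorem no_low_degree_isotropic_general (g : ℤ) :
    ¬ ∃ a b : ℤ, selfIntersection g a b = 0 ∧ 0 < degree g a b ∧ degree g a b < g := by
  rintro ⟨a, b, h, hpos, hlt⟩
  obtain ⟨n, rfl, rfl⟩ :=
    exists_eq_sq_of_selfIntersection_eq_zero (ne_zero_of_degree_pos h hpos) h
  exact hlt.not_ge (sq_le_degree_sq hpos)

/-- For `9 ≤ g ≤ 12`, there are no integers `a, b` with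
`(2g−2)·a² + 4·a·b − 2·b² = 0` and `1 ≤ (2g−2)·a + 2·b ≤ g − 2`. -/
theorem no_low_degree_isotropic (g : ℤ) (hg9 : 9 ≤ g) (hg12 : g ≤ 12) :
    ¬ ∃ a b : ℤ, (2 * g - 2) * a ^ 2 + 4 * a * b - 2 * b ^ 2 = 0 ∧
      1 ≤ (2 * g - 2) * a + 2 * b ∧ (2 * g - 2) * a + 2 * b ≤ g - 2 :=
  fun ⟨a, b, h, hpos, hle⟩ =>
    no_low_degree_isotropic_general g ⟨a, b, h, hpos, hle.trans_lt (sub_lt_self g two_pos)⟩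
end

section
/- Let R be a commutative ring, let c₁, c₂ be integers, and let ξ, H, L, P be elements of R satisfying ξ² = c₁·ξ·H − c₂·L, H² = 2·L, L² = 0, and ξ·H·L = P (integer coefficients interpreted via the canonical map ℤ → R). Then for every integer a, (2ξ + (3 − c₁)·H)³·(ξ − a·H) = 2·(−2a(c₁² − 2c₂ + 27) + c₁³ − 2c₁c₂ + 9(c₁² + 3c₁ − 2c₂ + 3))·P. -/
/-!
Completing the square in the Grothendieck relation, the relative anticanonical class
`δ = 2ξ - c₁H` satisfies `δ² = (d c₁² - 4c₂)L` on a base with `H² = dL`. As `δ²` and `H²` are both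
multiples of `L`, the cube of the anticanonical class `δ + rH` (where `r` is the index of the base)
is `L` times a combination of `δ` and `H`. Intersecting with `ξ - aH` then only requires the
numbers `δξL = c₁P`, `δHL = 2P`, `ξHL = P` and `H²L = 0`.
-/

section RelativeAnticanonical

variable {R : Type*} [CommRing R] {c₁ c₂ d ξ H L : R}

/-- The relative anticanonical class `-K_{P(E)/X} = 2ξ - c₁H` of the projectivization of a rank-2
bundle `E` over `X`, with `c₁(E) = c₁H` and tautological class `ξ`. The absolute anticanonical class
is obtained by adding `rH`, where `-K_X = rH`. -/
def relAnticanonical (c₁ ξ H : R) : R :=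
  2 * ξ - c₁ * H

theorem relAnticanonical_sq (hξ : ξ ^ 2 = c₁ * ξ * H - c₂ * L) (hH : H ^ 2 = d * L) :
    relAnticanonical c₁ ξ H ^ 2 = (d * c₁ ^ 2 - 4 * c₂) * L :=
  calc relAnticanonical c₁ ξ H ^ 2
      = 4 * (ξ ^ 2 - c₁ * ξ * H) + c₁ ^ 2 * H ^ 2 := by unfold relAnticanonical; ring
    _ = (d * c₁ ^ 2 - 4 * c₂) * L := by rw [hξ, hH]; ring

theorem add_mul_pow_three_of_sq_eq {D δ : R} (hδ : δ ^ 2 = D * L) (hH : H ^ 2 = d * L) (r : R) :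
    (δ + r * H) ^ 3 = ((D + 3 * r ^ 2 * d) * δ + (3 * r * D + r ^ 3 * d) * H) * L :=
  calc (δ + r * H) ^ 3
      = (δ + 3 * r * H) * δ ^ 2 + (3 * r ^ 2 * δ + r ^ 3 * H) * H ^ 2 := by ring
    _ = ((D + 3 * r ^ 2 * d) * δ + (3 * r * D + r ^ 3 * d) * H) * L := by rw [hδ, hH]; ring

theorem sq_mul_eq_zero_of_sq_eq_mul (hH : H ^ 2 = d * L) (hL : L ^ 2 = 0) : H ^ 2 * L = 0 := by
  rw [hH, mul_assoc, ← sq, hL, mul_zero]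

theorem relAnticanonical_mul_mul_of_sq_mul_eq_zero (hHL : H ^ 2 * L = 0) :
    relAnticanonical c₁ ξ H * H * L = 2 * (ξ * H * L) :=
  calc relAnticanonical c₁ ξ H * H * L
      = 2 * (ξ * H * L) - c₁ * (H ^ 2 * L) := by unfold relAnticanonical; ring
    _ = 2 * (ξ * H * L) := by rw [hHL, mul_zero, sub_zero]

theorem relAnticanonical_mul_tautological_mul (hξ : ξ ^ 2 = c₁ * ξ * H - c₂ * L)
    (hL : L ^ 2 = 0) : relAnticanonical c₁ ξ H * ξ * L = c₁ * (ξ * H * L) :=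
  calc relAnticanonical c₁ ξ H * ξ * L
      = (2 * ξ ^ 2 - c₁ * ξ * H) * L := by unfold relAnticanonical; ring
    _ = c₁ * (ξ * H * L) - 2 * c₂ * L ^ 2 := by rw [hξ]; ring
    _ = c₁ * (ξ * H * L) := by rw [hL, mul_zero, sub_zero]

end RelativeAnticanonical

-- `d` and `r` are the degree and the index of the base threefold; the quadric has `d = 2`, `r = 3`.
theorem anticanonical_cube_mul_general
    {R : Type*} [CommRing R] {c₁ c₂ d ξ H L P : R}
    (hξ : ξ ^ 2 = c₁ * ξ * H - c₂ * L)
    (hH : H ^ 2 = d * L)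
    (hL : L ^ 2 = 0)
    (hP : ξ * H * L = P) (r a : R) :
    (2 * ξ + (r - c₁) * H) ^ 3 * (ξ - a * H)
      = ((d * c₁ ^ 2 - 4 * c₂ + 3 * r ^ 2 * d) * (c₁ - 2 * a)
          + 3 * r * (d * c₁ ^ 2 - 4 * c₂) + r ^ 3 * d) * P := by
  set δ := relAnticanonical c₁ ξ H with hδ
  set D := d * c₁ ^ 2 - 4 * c₂
  have anticanonical_eq : 2 * ξ + (r - c₁) * H = δ + r * H := by
    rw [hδ, relAnticanonical]; ring
  have hHHL : H ^ 2 * L = 0 := sq_mul_eq_zero_of_sq_eq_mul hH hL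
  have hδHL : δ * H * L = 2 * P := hP ▸ relAnticanonical_mul_mul_of_sq_mul_eq_zero hHHL
  have hδξL : δ * ξ * L = c₁ * P := hP ▸ relAnticanonical_mul_tautological_mul hξ hL
  calc (2 * ξ + (r - c₁) * H) ^ 3 * (ξ - a * H)
      = ((D + 3 * r ^ 2 * d) * δ + (3 * r * D + r ^ 3 * d) * H) * L * (ξ - a * H) := by
        rw [anticanonical_eq, add_mul_pow_three_of_sq_eq (relAnticanonical_sq hξ hH) hH]
    _ = (D + 3 * r ^ 2 * d) * (δ * ξ * L - a * (δ * H * L))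
          + (3 * r * D + r ^ 3 * d) * (ξ * H * L - a * (H ^ 2 * L)) := by ring
    _ = ((D + 3 * r ^ 2 * d) * (c₁ - 2 * a) + 3 * r * D + r ^ 3 * d) * P := by
        rw [hδξL, hδHL, hP, hHHL]; ring

/-- The identity `(−K_{P(E)})³·(ξ − aH) = 2(−2a(c₁² − 2c₂ + 27) + c₁³ − 2c₁c₂
+ 9(c₁² + 3c₁ − 2c₂ + 3))·P` in the Chow ring of the projectivization of a
rank-2 bundle on the quadric threefold. -/
theorem anticanonical_cube_mul
    {R : Type*} [CommRing R] (c₁ c₂ : ℤ) (ξ H L P : R)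
    (hξ : ξ ^ 2 = (c₁ : R) * ξ * H - (c₂ : R) * L)
    (hH : H ^ 2 = 2 * L)
    (hL : L ^ 2 = 0)
    (hP : ξ * H * L = P) :
    ∀ a : ℤ,
      (2 * ξ + ((3 : R) - (c₁ : R)) * H) ^ 3 * (ξ - (a : R) * H)
        = 2 * (-2 * (a : R) * ((c₁ : R) ^ 2 - 2 * (c₂ : R) + 27)
            + (c₁ : R) ^ 3 - 2 * (c₁ : R) * (c₂ : R)
            + 9 * ((c₁ : R) ^ 2 + 3 * (c₁ : R) - 2 * (c₂ : R) + 3)) * P := by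
  intro a
  rw [anticanonical_cube_mul_general hξ hH hL hP 3 a]
  ring
end
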